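/- arXiv:2104.12415 — 9 statements merged into one kernel-verified Lean document; each statement's English description precedes it below -/
import Mathlib

section
/- Let (A,S,Z,Φ) be a structured C*-algebra. For all a,b,c,s ∈ S, if a < b and b <_s c, then a <_s c (transitivity of domination). -/
variable {A : Type*} [CStarAlgebra A] [PartialOrder A] [StarOrderedRing A]

/-- A structured C*-algebra `(A, S, Z, Φ)`. -/
structure StructuredCStar (A : Type*) [CStarAlgebra A] [PartialOrder A]
    [StarOrderedRing A] where
  /-- The expectation. -/
  Φ : A →ₗ[ℂ] A
  /-- The distinguished closed *-subsemigroup. -/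
  S : Set A
  /-- The distinguished central C*-subalgebra. -/
  Z : Set A
  Φ_idem : ∀ a : A, Φ (Φ a) = Φ a
  Φ_contractive : ∀ a : A, ‖Φ a‖ ≤ ‖a‖
  Φ_pos : ∀ a : A, 0 ≤ a → 0 ≤ Φ a
  Φ_mul_left : ∀ a b : A, Φ (Φ a * b) = Φ a * Φ b
  Φ_mul_right : ∀ a b : A, Φ (a * Φ b) = Φ a * Φ b
  S_isClosed : IsClosed S
  S_mul : ∀ a ∈ S, ∀ b ∈ S, a * b ∈ S
  S_star : ∀ a ∈ S, star a ∈ S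
  S_smul : ∀ (c : ℂ), ∀ a ∈ S, c • a ∈ S
  Z_sub_S : Z ⊆ S
  Z_isClosed : IsClosed Z
  Z_add : ∀ a ∈ Z, ∀ b ∈ Z, a + b ∈ Z
  Z_mul : ∀ a ∈ Z, ∀ b ∈ Z, a * b ∈ Z
  Z_star : ∀ a ∈ Z, star a ∈ Z
  Z_smul : ∀ (c : ℂ), ∀ a ∈ Z, c • a ∈ Z
  Z_fixed : ∀ z ∈ Z, Φ z = z
  Z_central : ∀ z ∈ Z, ∀ a : A, z * Φ a = Φ a * z
  PhiS_add : ∀ x ∈ Φ '' S, ∀ y ∈ Φ '' S, x + y ∈ Φ '' S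
  PhiS_ideal_right : ∀ x ∈ Φ '' S, ∀ a : A, x * Φ a ∈ Φ '' S
  PhiS_ideal_left : ∀ x ∈ Φ '' S, ∀ a : A, Φ a * x ∈ Φ '' S
  S_sq_sub_PhiS : ∀ s ∈ S, star s * s ∈ Φ '' S
  PhiS_sub_S : ∀ s ∈ S, Φ s ∈ S

namespace StructuredCStar

variable (𝒜 : StructuredCStar A)

/-- `a <_s b` : domination witnessed by `s`. -/
def domBy (a s b : A) : Prop :=
  a = a * s * b ∧ a = b * s * a ∧
  a * s ∈ 𝒜.Φ '' 𝒜.S ∧ s * a ∈ 𝒜.Φ '' 𝒜.S ∧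
  b * s ∈ 𝒜.Z ∧ s * b ∈ 𝒜.Z

/-- `a < b` : domination. -/
def dom (a b : A) : Prop := ∃ s ∈ 𝒜.S, 𝒜.domBy a s b

/-- `N ⊆ S` is binormal. -/
def Binormal (N : Set A) : Prop :=
  ∀ a ∈ 𝒜.S, ∀ b ∈ 𝒜.S, a * b ∈ N → ∀ z ∈ N, a * z * b ∈ N

/-- `B ⊆ S` is bistable. -/
def Bistable (B : Set A) : Prop :=
  ∀ a ∈ 𝒜.S, ∀ b ∈ 𝒜.S, a * b ∈ B → 𝒜.Φ a * b ∈ B ∧ a * 𝒜.Φ b ∈ B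

/-- `P ⊆ S` is productive. -/
def Productive (P : Set A) : Prop :=
  ∀ a ∈ 𝒜.S, 𝒜.Φ a ∈ closure ((a * ·) '' P) ∧ 𝒜.Φ a ∈ closure ((· * a) '' P)

end StructuredCStar


/-- transitivity of domination: if `a < b` and `b <_s c` then `a <_s c`. -/
theorem StructuredCStar.domBy_trans (𝒜 : StructuredCStar A) {a b c s : A}
    (ha : a ∈ 𝒜.S) (hb : b ∈ 𝒜.S) (hc : c ∈ 𝒜.S) (hs : s ∈ 𝒜.S)
    (hab : 𝒜.dom a b) (hbc : 𝒜.domBy b s c) : 𝒜.domBy a s c := by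
  obtain ⟨t, -, hatb, hbta, hat, hta, -, -⟩ := hab
  obtain ⟨hbsc, hcsb, hbs, hsb, hcs, hsc⟩ := hbc
  refine ⟨?_, ?_, ?_, ?_, hcs, hsc⟩
  · calc a = a * t * (b * s * c) := by rw [← hbsc, ← hatb]
      _ = a * t * b * s * c := by simp only [mul_assoc]
      _ = a * s * c := by rw [← hatb]
  · calc a = c * s * b * t * a := by rw [← hcsb, ← hbta]
      _ = c * s * (b * t * a) := by simp only [mul_assoc]
      _ = c * s * a := by rw [← hbta]
  · have h : a * s = a * t * (b * s) := by rw [← mul_assoc, ← hatb]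
    obtain ⟨x, -, hx⟩ := hbs
    rw [h, ← hx]
    exact 𝒜.PhiS_ideal_right _ hat x
  · have h : s * a = s * b * (t * a) := by
      rw [mul_assoc, ← mul_assoc b, ← hbta]
    obtain ⟨x, -, hx⟩ := hsb
    rw [h, ← hx]
    exact 𝒜.PhiS_ideal_left _ hta x
end

section
/- Let (A,S,Z,Φ) be a structured C*-algebra. For all a,b,s ∈ S, if a <_s b then a* <_b s, i.e. a* = a*bs = sba*, a*b ∈ Φ[S], ba* ∈ Φ[S], sb ∈ Z and bs ∈ Z. -/
variable {A : Type*} [CStarAlgebra A] [PartialOrder A] [StarOrderedRing A]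

/-- If a normal element `z` satisfies `z * a = a` then also `star z * a = a`. -/
theorem star_mul_eq_self_of_mul_eq_self {A : Type*} [CStarAlgebra A] {z a : A}
    (hz : star z * z = z * star z) (h : z * a = a) : star z * a = a := by
  rw [← sub_eq_zero, ← CStarRing.star_mul_self_eq_zero_iff]
  have hzero : z * a - a = 0 := sub_eq_zero.mpr h
  calc star (star z * a - a) * (star z * a - a)
      = star a * (z * star z) * a - star a * z * a - star a * star z * a + star a * a := by
        simp only [star_sub, star_mul, star_star]; noncomm_ring
    _ = star (z * a - a) * (z * a - a) := by
        rw [← hz]; simp only [star_sub, star_mul]; noncomm_ring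
    _ = 0 := by rw [hzero, mul_zero]

/-- Polarization: `star x * y` as a combination of elements of the form `star w * w`. -/
theorem star_mul_eq_polarization {A : Type*} [CStarAlgebra A] (x y : A) :
    star x * y = (1 / 4 : ℂ) • (star (x + (1 : ℂ) • y) * (x + (1 : ℂ) • y))
      + (-1 / 4 : ℂ) • (star (x + (-1 : ℂ) • y) * (x + (-1 : ℂ) • y))
      + (-Complex.I / 4) • (star (x + Complex.I • y) * (x + Complex.I • y))
      + (Complex.I / 4) • (star (x + (-Complex.I) • y) * (x + (-Complex.I) • y)) := by
  simp only [star_add, star_smul, add_mul, mul_add, smul_mul_assoc, mul_smul_comm, smul_add,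
    smul_smul, RCLike.star_def, map_neg, map_one, Complex.conj_I]
  match_scalars <;> ring_nf <;> simp only [Complex.I_sq] <;> ring_nf

namespace StructuredCStar

theorem smul_mem_image (𝒜 : StructuredCStar A) (c : ℂ) {x : A} (hx : x ∈ 𝒜.Φ '' 𝒜.S) :
    c • x ∈ 𝒜.Φ '' 𝒜.S := by
  obtain ⟨t, ht, rfl⟩ := hx
  exact ⟨c • t, 𝒜.S_smul c t ht, map_smul _ _ _⟩

theorem image_subset (𝒜 : StructuredCStar A) {x : A} (hx : x ∈ 𝒜.Φ '' 𝒜.S) : x ∈ 𝒜.S := by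
  obtain ⟨t, ht, rfl⟩ := hx
  exact 𝒜.PhiS_sub_S t ht

theorem mem_image_of_mem_Z (𝒜 : StructuredCStar A) {z : A} (hz : z ∈ 𝒜.Z) :
    z ∈ 𝒜.Φ '' 𝒜.S :=
  ⟨z, 𝒜.Z_sub_S hz, 𝒜.Z_fixed z hz⟩

theorem star_mul_self_comm_of_mem_Z (𝒜 : StructuredCStar A) {z : A} (hz : z ∈ 𝒜.Z) :
    star z * z = z * star z := by
  simpa [𝒜.Z_fixed z hz] using 𝒜.Z_central _ (𝒜.Z_star z hz) z

/-- Conjugation by an element of `S` maps products `star x * y` with `x, y ∈ Φ[S]` to `Φ[S]`. -/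
theorem star_mul_mul_mem_image (𝒜 : StructuredCStar A) {x y c : A} (hx : x ∈ 𝒜.Φ '' 𝒜.S)
    (hy : y ∈ 𝒜.Φ '' 𝒜.S) (hc : c ∈ 𝒜.S) : star (x * c) * (y * c) ∈ 𝒜.Φ '' 𝒜.S := by
  have hsq (l : ℂ) : star (x * c + l • (y * c)) * (x * c + l • (y * c)) ∈ 𝒜.Φ '' 𝒜.S := by
    rw [← smul_mul_assoc, ← add_mul]
    exact 𝒜.S_sq_sub_PhiS _ (𝒜.S_mul _
      (𝒜.image_subset (𝒜.PhiS_add x hx _ (𝒜.smul_mem_image l hy))) c hc)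
  rw [star_mul_eq_polarization]
  exact 𝒜.PhiS_add _ (𝒜.PhiS_add _ (𝒜.PhiS_add _ (𝒜.smul_mem_image _ (hsq _)) _
    (𝒜.smul_mem_image _ (hsq _))) _ (𝒜.smul_mem_image _ (hsq _))) _
    (𝒜.smul_mem_image _ (hsq _))

end StructuredCStar

/-- if `a <_s b` then `a* <_b s`. -/
theorem StructuredCStar.star_domBy (𝒜 : StructuredCStar A) {a s b : A}
    (ha : a ∈ 𝒜.S) (hs : s ∈ 𝒜.S) (hb : b ∈ 𝒜.S)
    (h : 𝒜.domBy a s b) :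
    star a = star a * b * s ∧ star a = s * b * star a ∧
    star a * b ∈ 𝒜.Φ '' 𝒜.S ∧ b * star a ∈ 𝒜.Φ '' 𝒜.S ∧
    s * b ∈ 𝒜.Z ∧ b * s ∈ 𝒜.Z := by
  obtain ⟨hasb, hbsa, has, hsa, hbs, hsb⟩ := h
  refine ⟨?_, ?_, ?_, ?_, hsb, hbs⟩
  · have key := star_mul_eq_self_of_mul_eq_self
      (𝒜.star_mul_self_comm_of_mem_Z hbs) hbsa.symm
    simpa [mul_assoc] using (congrArg star key).symm
  · have hstar : star (s * b) * star a = star a := by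
      rw [← star_mul, ← mul_assoc, ← hasb]
    have hnormal : star (star (s * b)) * star (s * b) = star (s * b) * star (star (s * b)) := by
      rw [star_star, 𝒜.star_mul_self_comm_of_mem_Z hsb]
    simpa using (star_mul_eq_self_of_mul_eq_self hnormal hstar).symm
  · have hmem := 𝒜.star_mul_mul_mem_image has
      (𝒜.mem_image_of_mem_Z (𝒜.Z_star _ hbs)) hb
    have heq : star (a * s * b) * (star (b * s) * b) = star a * b := by
      rw [← hasb, ← mul_assoc, ← star_mul, ← hbsa]
    rwa [heq] at hmem
  · have hmem := 𝒜.star_mul_mul_mem_image hsa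
      (𝒜.mem_image_of_mem_Z (𝒜.Z_star _ hsb)) (𝒜.S_star b hb)
    have heq : star (s * a * star b) * (star (s * b) * star b) = b * star a := by
      calc star (s * a * star b) * (star (s * b) * star b)
          = b * star (b * s * (b * s * a)) := by simp only [star_mul, star_star, mul_assoc]
        _ = b * star a := by rw [← hbsa, ← hbsa]
    rwa [heq] at hmem
end

section
/- Let (A,S,Z,Φ) be a structured C*-algebra. If a,b ∈ S satisfy a < b, then there exists s ∈ S such that a <_s b and both sb and bs are positive elements of Z of norm at most 1. -/
variable {A : Type*} [CStarAlgebra A] [PartialOrder A] [StarOrderedRing A]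

/-- A real function vanishing at `0` and equal to `1` at `1`, for which `t * damping t` takes values
in the unit interval. -/
noncomputable def damping (t : ℝ) : ℝ := 4 * t / (1 + t ^ 2) ^ 2

lemma damping_zero : damping 0 = 0 := by simp [damping]

lemma damping_one : damping 1 = 1 := by norm_num [damping]

lemma continuous_damping : Continuous damping := by
  unfold damping
  exact Continuous.div (by fun_prop) (by fun_prop) fun t => by positivity

lemma mul_damping_nonneg (t : ℝ) : 0 ≤ t * damping t := by
  have h : t * damping t = (2 * t / (1 + t ^ 2)) ^ 2 := by
    unfold damping
    field_simp
    norm_num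
  rw [h]
  positivity

lemma mul_damping_le_one (t : ℝ) : t * damping t ≤ 1 := by
  have h : t * damping t = 4 * t ^ 2 / (1 + t ^ 2) ^ 2 := by unfold damping; ring
  rw [h, div_le_one (by positivity)]
  nlinarith [sq_nonneg (1 - t ^ 2)]

section

variable {B : Type*} [CStarAlgebra B] {p q s : B}

lemma one_add_sq_sq_mul_cfc_damping (hp : IsSelfAdjoint p) :
    (1 + p ^ 2) ^ 2 * cfc damping p = (4 : ℝ) • p ∧ IsUnit ((1 + p ^ 2) ^ 2) := by
  have hD : (1 + p ^ 2) ^ 2 = cfc (fun t : ℝ => (1 + t ^ 2) ^ 2) p := by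
    rw [cfc_pow (fun t : ℝ => 1 + t ^ 2) 2 p, cfc_const_add (1 : ℝ) (fun t => t ^ 2) p,
      cfc_pow_id (R := ℝ) p 2, map_one]
  have hu : ContinuousOn damping (spectrum ℝ p) := continuous_damping.continuousOn
  have h4 : (4 : ℝ) • p = cfc (fun t : ℝ => 4 * t) p := (cfc_const_mul_id (4 : ℝ) p).symm
  rw [hD, h4]
  refine ⟨?_, ?_⟩
  · rw [← cfc_mul _ _ p (by fun_prop) hu]
    congr 1
    ext t
    unfold damping
    field_simp
  · rw [isUnit_cfc_iff _ p]
    intro t _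
    positivity

/-- The functional calculus for `damping` preserves intertwining relations. -/
lemma SemiconjBy.cfc_damping (hp : IsSelfAdjoint p) (hq : IsSelfAdjoint q)
    (h : SemiconjBy s p q) : SemiconjBy s (cfc damping p) (cfc damping q) := by
  obtain ⟨hp', -⟩ := one_add_sq_sq_mul_cfc_damping hp
  obtain ⟨hq', hqu⟩ := one_add_sq_sq_mul_cfc_damping hq
  have hD : SemiconjBy s ((1 + p ^ 2) ^ 2) ((1 + q ^ 2) ^ 2) :=
    ((SemiconjBy.one_right s).add_right (h.pow_right 2)).pow_right 2
  refine hqu.mul_left_cancel ?_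
  rw [← mul_assoc, ← hD.eq, mul_assoc, hp', ← mul_assoc, hq', mul_smul_comm, smul_mul_assoc, h.eq]

lemma mul_cfc_damping (hp : IsSelfAdjoint p) :
    p * cfc damping p = cfc (fun t : ℝ => t * damping t) p := by
  rw [cfc_mul (fun t : ℝ => t) damping p (by fun_prop) continuous_damping.continuousOn,
    cfc_id' ℝ p]

lemma norm_mul_cfc_damping_le (hp : IsSelfAdjoint p) : ‖p * cfc damping p‖ ≤ 1 := by
  rw [mul_cfc_damping hp]
  refine norm_cfc_le zero_le_one fun t _ => ?_
  rw [Real.norm_of_nonneg (mul_damping_nonneg t)]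
  exact mul_damping_le_one t

end

lemma mul_cfc_damping_nonneg {p : A} (hp : IsSelfAdjoint p) : 0 ≤ p * cfc damping p := by
  rw [mul_cfc_damping hp]
  exact cfc_nonneg fun t _ => mul_damping_nonneg t

namespace StructuredCStar

lemma Z_commute (𝒜 : StructuredCStar A) {x y : A} (hx : x ∈ 𝒜.Z) (hy : y ∈ 𝒜.Z) :
    Commute x y := by
  have h := 𝒜.Z_central x hx y
  rwa [𝒜.Z_fixed y hy] at h

lemma Z_isStarNormal (𝒜 : StructuredCStar A) {x : A} (hx : x ∈ 𝒜.Z) : IsStarNormal x :=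
  ⟨𝒜.Z_commute (𝒜.Z_star x hx) hx⟩

lemma cfc_mem_Z (𝒜 : StructuredCStar A) {p : A} (hp : p ∈ 𝒜.Z) {f : ℝ → ℝ}
    (hf : Continuous f) (hf₀ : f 0 = 0) : cfc f p ∈ 𝒜.Z := by
  let Z' : NonUnitalStarSubalgebra ℂ A :=
    { carrier := 𝒜.Z
      add_mem' := fun {x y} hx hy => 𝒜.Z_add x hx y hy
      zero_mem' := by simpa using 𝒜.Z_smul 0 p hp
      mul_mem' := fun {x y} hx hy => 𝒜.Z_mul x hx y hy
      smul_mem' := fun c {x} hx => 𝒜.Z_smul c x hx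
      star_mem' := fun {x} hx => 𝒜.Z_star x hx }
  have : IsClosed (Z' : Set A) := 𝒜.Z_isClosed
  rw [← cfcₙ_eq_cfc hf.continuousOn hf₀]
  exact cfcₙ_mem (𝕜' := ℂ) (s := Z') f hp

end StructuredCStar

/-- if `a < b` then there is a witness `s` with `s * b` and `b * s`
positive elements of `Z` of norm at most `1`. -/
theorem StructuredCStar.exists_domBy_witness_pos_unitBall (𝒜 : StructuredCStar A)
    {a b : A} (ha : a ∈ 𝒜.S) (hb : b ∈ 𝒜.S) (h : 𝒜.dom a b) :
    ∃ s ∈ 𝒜.S, 𝒜.domBy a s b ∧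
      0 ≤ s * b ∧ ‖s * b‖ ≤ 1 ∧ 0 ≤ b * s ∧ ‖b * s‖ ≤ 1 := by
  obtain ⟨s, hs, hasb, hbsa, has, hsa, hy, hx⟩ := h
  have hxn := 𝒜.Z_isStarNormal hx
  have hyn := 𝒜.Z_isStarNormal hy
  have hs_conj : SemiconjBy s (b * s) (s * b) := (mul_assoc s b s).symm
  have ha_right : SemiconjBy a (s * b) 1 := by
    rw [SemiconjBy, one_mul, ← mul_assoc, ← hasb]
  have ha_left : SemiconjBy a 1 (b * s) := by
    rw [SemiconjBy, mul_one, ← hbsa]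
  have hs_star := hs_conj.star_right hyn hxn
  have ha_right_star : SemiconjBy a (star (s * b)) 1 := by
    simpa using ha_right.star_right hxn inferInstance
  have ha_left_star : SemiconjBy a 1 (star (b * s)) := by
    simpa using ha_left.star_right inferInstance hyn
  set x := s * b with hx_def
  set y := b * s with hy_def
  set p := star x * x with hp_def
  set q := star y * y
  have hp : IsSelfAdjoint p := .star_mul_self x
  have hq : IsSelfAdjoint q := .star_mul_self y
  have hpZ : p ∈ 𝒜.Z := 𝒜.Z_mul _ (𝒜.Z_star x hx) _ hx
  have hqZ : q ∈ 𝒜.Z := 𝒜.Z_mul _ (𝒜.Z_star y hy) _ hy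
  set u := cfc damping p
  set v := cfc damping q
  have huZ : u ∈ 𝒜.Z := 𝒜.cfc_mem_Z hpZ continuous_damping damping_zero
  have hvZ : v ∈ 𝒜.Z := 𝒜.cfc_mem_Z hqZ continuous_damping damping_zero
  have hau : a * u = a := by
    have h1 : SemiconjBy a p 1 := by simpa using ha_right_star.mul_right ha_right
    simpa [damping_one] using (h1.cfc_damping hp (.one A)).eq
  have hva : v * a = a := by
    have h1 : SemiconjBy a 1 q := by simpa using ha_left_star.mul_right ha_left
    simpa [damping_one] using (h1.cfc_damping (.one A) hq).eq.symm
  have hap : a * p = a := by simpa using (ha_right_star.mul_right ha_right).eq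
  have hqa : q * a = a := by simpa using (ha_left_star.mul_right ha_left).eq.symm
  have hax : a * star x = a := by simpa using ha_right_star.eq
  have hya : star y * a = a := by simpa using ha_left_star.eq.symm
  have hsuv : s * v = u * s := ((hs_star.mul_right hs_conj).cfc_damping hq hp).eq
  have hsy : s * star y = star x * s := hs_star.eq
  have ht : u * star x * s = s * (star y * v) := by
    rw [mul_assoc, ← hsy, ← mul_assoc, ← hsuv, mul_assoc, (𝒜.Z_commute hvZ (𝒜.Z_star y hy)).eq]
  have htb : u * star x * s * b = p * u := by
    rw [mul_assoc, ← hx_def, mul_assoc, ← hp_def, (𝒜.Z_commute huZ hpZ).eq]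
  have hbt : b * (u * star x * s) = q * v := by
    rw [ht, ← mul_assoc, ← hy_def, ← mul_assoc, (𝒜.Z_commute hy (𝒜.Z_star y hy)).eq]
  refine ⟨u * star x * s,
    𝒜.S_mul _ (𝒜.Z_sub_S (𝒜.Z_mul u huZ _ (𝒜.Z_star x hx))) s hs, ⟨?_, ?_, ?_, ?_, ?_, ?_⟩, ?_⟩
  · rw [mul_assoc, htb, ← mul_assoc, hap, hau]
  · rw [hbt, mul_assoc, hva, hqa]
  · rwa [← mul_assoc, ← mul_assoc, hau, hax]
  · rwa [ht, mul_assoc, mul_assoc, hva, hya]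
  · rw [hbt]
    exact 𝒜.Z_mul q hqZ v hvZ
  · rw [htb]
    exact 𝒜.Z_mul p hpZ u huZ
  · rw [htb, hbt]
    exact ⟨mul_cfc_damping_nonneg hp, norm_mul_cfc_damping_le hp,
      mul_cfc_damping_nonneg hq, norm_mul_cfc_damping_le hq⟩
end

section
/- Let (A,S,Z,Φ) be a structured C*-algebra. The domination relation is interpolative: for all a,b ∈ S, if a < b then there exists c ∈ S with a < c and c < b. -/
variable {A : Type*} [CStarAlgebra A] [PartialOrder A] [StarOrderedRing A]

/-- There are continuous functions `m` and `k` vanishing at `0` such that `k x` is an inverse of `x`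
on the support of `1 - (1 - x) * (1 - m x)`. -/
theorem Complex.exists_continuous_local_inverse :
    ∃ m k : ℂ → ℂ, Continuous m ∧ Continuous k ∧ m 0 = 0 ∧ k 0 = 0 ∧
      ∀ x, (x + m x - x * m x) * (x * k x) = x + m x - x * m x := by
  let d : ℂ → ℂ := fun x ↦ ((max (‖x‖ ^ 2) (1 / 4) : ℝ) : ℂ)
  have hd_cont : Continuous d := by fun_prop
  have hd_ne (x : ℂ) : d x ≠ 0 :=
    Complex.ofReal_ne_zero.2 (lt_max_of_lt_right (by norm_num)).ne'
  have hd (x : ℂ) (hx : 1 / 2 ≤ ‖x‖) : x * star x = d x := by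
    have : max (‖x‖ ^ 2) (1 / 4) = ‖x‖ ^ 2 := max_eq_left (by nlinarith)
    simp only [d, this]
    simpa using Complex.mul_conj' x
  let k : ℂ → ℂ := fun x ↦ star x / d x
  have hk_cont : Continuous k := continuous_star.div hd_cont hd_ne
  have hk (x : ℂ) (hx : 1 / 2 ≤ ‖x‖) : x * k x = 1 := by
    rw [← mul_div_assoc, hd x hx, div_self (hd_ne x)]
  have hk_zero : k 0 = 0 := by simp [k]
  let m : ℂ → ℂ := fun x ↦ 1 - k (1 - x)
  have hm_cont : Continuous m := by fun_prop
  have hm_zero : m 0 = 0 := by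
    have := hk 1 (by norm_num)
    simp only [m, sub_zero, sub_eq_zero]
    simpa using this.symm
  have hfun (x : ℂ) : (x + m x - x * m x) * (x * k x) = x + m x - x * m x := by
    by_cases hx : 1 / 2 ≤ ‖x‖
    · rw [hk x hx, mul_one]
    · have h1 : 1 / 2 ≤ ‖1 - x‖ := by
        have := norm_sub_norm_le (1 : ℂ) x
        rw [norm_one] at this
        linarith
      have h2 : x + m x - x * m x = 0 := by
        have := hk (1 - x) h1
        simp only [m]
        linear_combination -this
      rw [h2, zero_mul]
  exact ⟨m, k, hm_cont, hk_cont, hm_zero, hk_zero, hfun⟩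

/-- In a closed non-unital star subalgebra containing a normal element `p` there are `m` and `h`
such that `g = p + m - p * m`, that is `1 - (1 - p) * (1 - m)`, satisfies `g * (p * h) = g`. -/
theorem NonUnitalStarSubalgebra.exists_local_inverse {B : Type*} [CStarAlgebra B]
    (T : NonUnitalStarSubalgebra ℂ B) (hT : IsClosed (T : Set B)) {p : B} (hp : p ∈ T)
    [IsStarNormal p] :
    ∃ m ∈ T, ∃ h ∈ T, (p + m - p * m) * (p * h) = p + m - p * m := by
  obtain ⟨m, k, hm_cont, hk_cont, hm_zero, hk_zero, hfun⟩ :=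
    Complex.exists_continuous_local_inverse
  have hmem (f : ℂ → ℂ) : cfcₙ f p ∈ T :=
    NonUnitalStarAlgebra.elemental.le_of_mem hT hp (cfcₙ_mem_elemental f p)
  refine ⟨cfcₙ m p, hmem m, cfcₙ k p, hmem k, ?_⟩
  have hpm : p * cfcₙ m p = cfcₙ (fun x ↦ x * m x) p := by
    rw [cfcₙ_mul (fun x ↦ x) m p, cfcₙ_id' ℂ p]
  have hpk : p * cfcₙ k p = cfcₙ (fun x ↦ x * k x) p := by
    rw [cfcₙ_mul (fun x ↦ x) k p, cfcₙ_id' ℂ p]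
  have hg : p + cfcₙ m p - p * cfcₙ m p = cfcₙ (fun x ↦ x + m x - x * m x) p := by
    rw [hpm, cfcₙ_sub (fun x ↦ x + m x) (fun x ↦ x * m x) p (by fun_prop) (by simp [hm_zero])
      (by fun_prop) (by simp), cfcₙ_add (fun x ↦ x) m p, cfcₙ_id' ℂ p]
  rw [hg, hpk, ← cfcₙ_mul (fun x ↦ x + m x - x * m x) (fun x ↦ x * k x) p (by fun_prop)
    (by simp [hm_zero]) (by fun_prop) (by simp)]
  simp only [hfun]

namespace StructuredCStar

variable (𝒜 : StructuredCStar A)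

theorem Z_comm {x y : A} (hx : x ∈ 𝒜.Z) (hy : y ∈ 𝒜.Z) : x * y = y * x := by
  simpa only [𝒜.Z_fixed y hy] using 𝒜.Z_central x hx y

theorem Z_sub_PhiS {x : A} (hx : x ∈ 𝒜.Z) : x ∈ 𝒜.Φ '' 𝒜.S :=
  ⟨x, 𝒜.Z_sub_S hx, 𝒜.Z_fixed x hx⟩

/-- A Fuglede–Putnam property: elements of `S` intertwining two elements of `Z` also intertwine
their adjoints. -/
theorem star_intertwine {x y b : A} (hx : x ∈ 𝒜.Z) (hy : y ∈ 𝒜.Z) (hb : b ∈ 𝒜.S)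
    (h : x * b = b * y) : star x * b = b * star y := by
  have hbb {w : A} (hw : w ∈ 𝒜.Z) : w * (star b * b) = star b * b * w := by
    obtain ⟨u, -, hu⟩ := 𝒜.S_sq_sub_PhiS b hb
    rw [← hu, 𝒜.Z_central w hw]
  have hsy := 𝒜.Z_star y hy
  have h' : star b * star x = star y * star b := by
    rw [← star_mul, ← star_mul, h]
  have e1 : star b * x * (star x * b) = star b * b * (y * star y) := by
    calc star b * x * (star x * b) = star b * (x * star x) * b := by noncomm_ring
      _ = star b * star x * (x * b) := by
        rw [𝒜.Z_comm hx (𝒜.Z_star x hx)]; noncomm_ring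
      _ = star y * (star b * b) * y := by rw [h', h]; noncomm_ring
      _ = star b * b * (y * star y) := by rw [hbb hsy, mul_assoc, 𝒜.Z_comm hsy hy]
  have e2 : star b * x * (b * star y) = star b * b * (y * star y) := by
    calc star b * x * (b * star y) = star b * (x * b) * star y := by noncomm_ring
      _ = star b * b * (y * star y) := by rw [h]; noncomm_ring
  have e3 : y * star b * (star x * b) = star b * b * (y * star y) := by
    calc y * star b * (star x * b) = y * (star b * star x) * b := by noncomm_ring
      _ = (y * star y) * (star b * b) := by rw [h']; noncomm_ring
      _ = star b * b * (y * star y) := hbb (𝒜.Z_mul y hy _ hsy)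
  have e4 : y * star b * (b * star y) = star b * b * (y * star y) := by
    calc y * star b * (b * star y) = y * (star b * b) * star y := by noncomm_ring
      _ = star b * b * (y * star y) := by rw [hbb hy, mul_assoc]
  rw [← sub_eq_zero, ← CStarRing.star_mul_self_eq_zero_iff]
  simp only [star_sub, star_mul, star_star, sub_mul, mul_sub, e1, e2, e3, e4, sub_self]

/-- The pairs in `Z × Z` intertwined by `b` and, in the opposite direction, by `s`. -/
def intertwiners {b s z : A} (hb : b ∈ 𝒜.S) (hs : s ∈ 𝒜.S) (hz : z ∈ 𝒜.Z) :
    NonUnitalStarSubalgebra ℂ (A × A) where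
  carrier := {q | q.1 ∈ 𝒜.Z ∧ q.2 ∈ 𝒜.Z ∧ q.1 * b = b * q.2 ∧ q.2 * s = s * q.1}
  add_mem' := by
    rintro q r ⟨q1, q2, q3, q4⟩ ⟨r1, r2, r3, r4⟩
    exact ⟨𝒜.Z_add _ q1 _ r1, 𝒜.Z_add _ q2 _ r2,
      by simp [add_mul, mul_add, q3, r3], by simp [add_mul, mul_add, q4, r4]⟩
  zero_mem' := by
    have h0 : (0 : A) ∈ 𝒜.Z := by simpa using 𝒜.Z_smul 0 z hz
    exact ⟨h0, h0, by simp, by simp⟩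
  mul_mem' := by
    rintro q r ⟨q1, q2, q3, q4⟩ ⟨r1, r2, r3, r4⟩
    refine ⟨𝒜.Z_mul _ q1 _ r1, 𝒜.Z_mul _ q2 _ r2, ?_, ?_⟩
    · rw [Prod.fst_mul, Prod.snd_mul, mul_assoc, r3, ← mul_assoc, q3, mul_assoc]
    · rw [Prod.fst_mul, Prod.snd_mul, mul_assoc, r4, ← mul_assoc, q4, mul_assoc]
  smul_mem' := by
    rintro c q ⟨q1, q2, q3, q4⟩
    exact ⟨𝒜.Z_smul c _ q1, 𝒜.Z_smul c _ q2, by simp [q3], by simp [q4]⟩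
  star_mem' := by
    rintro q ⟨q1, q2, q3, q4⟩
    exact ⟨𝒜.Z_star _ q1, 𝒜.Z_star _ q2, 𝒜.star_intertwine q1 q2 hb q3,
      𝒜.star_intertwine q2 q1 hs q4⟩

theorem isClosed_intertwiners {b s z : A} (hb : b ∈ 𝒜.S) (hs : s ∈ 𝒜.S) (hz : z ∈ 𝒜.Z) :
    IsClosed (𝒜.intertwiners hb hs hz : Set (A × A)) :=
  (𝒜.Z_isClosed.preimage continuous_fst).inter <|
    (𝒜.Z_isClosed.preimage continuous_snd).inter <|
      (isClosed_eq (by fun_prop) (by fun_prop)).inter (isClosed_eq (by fun_prop) (by fun_prop))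

end StructuredCStar

/-- the domination relation is interpolative. -/
theorem StructuredCStar.dom_interpolation (𝒜 : StructuredCStar A) {a b : A}
    (ha : a ∈ 𝒜.S) (hb : b ∈ 𝒜.S) (h : 𝒜.dom a b) :
    ∃ c ∈ 𝒜.S, 𝒜.dom a c ∧ 𝒜.dom c b := by
  obtain ⟨s, hs, h1, h2, h3, h4, hz, hw⟩ := h
  have hT := 𝒜.isClosed_intertwiners hb hs hz
  have hp : ((b * s, s * b) : A × A) ∈ 𝒜.intertwiners hb hs hz :=
    ⟨hz, hw, mul_assoc _ _ _, mul_assoc _ _ _⟩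
  have hn : IsStarNormal ((b * s, s * b) : A × A) :=
    ⟨Prod.ext (𝒜.Z_comm (𝒜.Z_star _ hz) hz) (𝒜.Z_comm (𝒜.Z_star _ hw) hw)⟩
  obtain ⟨m, hm, k, hk, hg⟩ := NonUnitalStarSubalgebra.exists_local_inverse _ hT hp
  have hgT := sub_mem (add_mem hp hm) (mul_mem hp hm)
  have hG₁ := congrArg Prod.fst hg
  have hG₂ := congrArg Prod.snd hg
  obtain ⟨m₁, m₂⟩ := m
  obtain ⟨k₁, k₂⟩ := k
  obtain ⟨hm₁, hm₂, -, -⟩ := hm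
  obtain ⟨hk₁, hk₂, -, hks⟩ := hk
  obtain ⟨hg₁, hg₂, hgb, hgs⟩ := hgT
  simp only [Prod.fst_mul, Prod.snd_mul, Prod.fst_add, Prod.snd_add, Prod.fst_sub,
    Prod.snd_sub] at hG₁ hG₂ hm₁ hm₂ hk₁ hk₂ hks hg₁ hg₂ hgb hgs
  have hga : (b * s + m₁ - b * s * m₁) * a = a := by
    rw [𝒜.Z_comm hz hm₁, sub_mul, add_mul, mul_assoc m₁, ← h2, add_sub_cancel_right]
  have hag : a * (s * b + m₂ - s * b * m₂) = a := by
    rw [mul_sub, mul_add, ← mul_assoc a (s * b), ← mul_assoc a s, ← h1, add_sub_cancel_right]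
  generalize b * s + m₁ - b * s * m₁ = g₁ at *
  generalize s * b + m₂ - s * b * m₂ = g₂ at *
  have hsg : s * (g₁ * b) = g₂ * (s * b) := by rw [← mul_assoc, ← hgs, mul_assoc]
  have hcs : g₁ * b * (s * k₁) = g₁ := by rw [mul_assoc, ← mul_assoc b, hG₁]
  have hsc : s * k₁ * (g₁ * b) = g₂ := by
    rw [← hks, mul_assoc, hsg, 𝒜.Z_comm hk₂ (𝒜.Z_mul _ hg₂ _ hw), mul_assoc, hG₂]
  refine ⟨g₁ * b, 𝒜.S_mul _ (𝒜.Z_sub_S hg₁) _ hb, ⟨s, hs, ?_, ?_, h3, h4, ?_, ?_⟩,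
    ⟨s * k₁, 𝒜.S_mul _ hs _ (𝒜.Z_sub_S hk₁), ?_, ?_, ?_, ?_, ?_, ?_⟩⟩
  · rw [hgb, ← mul_assoc, ← h1, hag]
  · rw [mul_assoc g₁, mul_assoc g₁, ← h2, hga]
  · rw [mul_assoc]
    exact 𝒜.Z_mul _ hg₁ _ hz
  · rw [hsg]
    exact 𝒜.Z_mul _ hg₂ _ hw
  · rw [hcs]
  · rw [mul_assoc, hsc, hgb]
  · rw [hcs]
    exact 𝒜.Z_sub_PhiS hg₁
  · rw [hsc]
    exact 𝒜.Z_sub_PhiS hg₂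
  · rw [← mul_assoc]
    exact 𝒜.Z_mul _ hz _ hk₁
  · rw [← hks, mul_assoc]
    exact 𝒜.Z_mul _ hk₂ _ hw
end

section
/- Let (A,S,Z,Φ) be a structured C*-algebra in which Z is binormal. If a,b,s,t ∈ S satisfy a = asb = bta, as ∈ Φ[S], ta ∈ Φ[S], sb ∈ Z and bt ∈ Z, then a < b (indeed a <_{sbt} b). -/
variable {A : Type*} [CStarAlgebra A] [PartialOrder A] [StarOrderedRing A]

/-- splitting the witness: if `Z` is binormal, `a = asb = bta`,
`as, ta ∈ Φ[S]` and `sb, bt ∈ Z`, then `a < b` (indeed `a <_{sbt} b`). -/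
theorem StructuredCStar.dom_of_split_witnesses (𝒜 : StructuredCStar A)
    (hZ : 𝒜.Binormal 𝒜.Z) {a b s t : A}
    (ha : a ∈ 𝒜.S) (hb : b ∈ 𝒜.S) (hs : s ∈ 𝒜.S) (ht : t ∈ 𝒜.S)
    (h1 : a = a * s * b) (h2 : a = b * t * a)
    (h3 : a * s ∈ 𝒜.Φ '' 𝒜.S) (h4 : t * a ∈ 𝒜.Φ '' 𝒜.S)
    (h5 : s * b ∈ 𝒜.Z) (h6 : b * t ∈ 𝒜.Z) :
    𝒜.dom a b ∧ 𝒜.domBy a (s * b * t) b := by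
  have comm_bt : a * s * (b * t) = b * t * (a * s) := by
    obtain ⟨x, -, hx⟩ := h3
    rw [← hx, 𝒜.Z_central _ h6]
  have comm_sb : s * b * (t * a) = t * a * (s * b) := by
    obtain ⟨x, -, hx⟩ := h4
    rw [← hx, 𝒜.Z_central _ h5]
  have hdom : 𝒜.domBy a (s * b * t) b := by
    refine ⟨?_, ?_, ?_, ?_, ?_, ?_⟩
    · calc a = b * t * (a * s * b) := by rw [← h1, ← h2]
        _ = a * s * (b * t) * b := by rw [comm_bt]; simp only [mul_assoc]
        _ = a * (s * b * t) * b := by simp only [mul_assoc]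
    · calc a = b * t * a * s * b := by rw [← h2, ← h1]
        _ = b * (s * b * (t * a)) := by rw [comm_sb]; simp only [mul_assoc]
        _ = b * (s * b * t) * a := by simp only [mul_assoc]
    · have h := 𝒜.PhiS_ideal_right _ h3 (b * t)
      rw [𝒜.Z_fixed _ h6] at h
      simpa only [mul_assoc] using h
    · have h := 𝒜.PhiS_ideal_left _ h4 (s * b)
      rw [𝒜.Z_fixed _ h5] at h
      simpa only [mul_assoc] using h
    · simpa only [mul_assoc] using hZ b hb t ht h6 _ h5
    · simpa only [mul_assoc] using hZ s hs b hb h5 _ h6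
  exact ⟨⟨s * b * t, 𝒜.S_mul _ (𝒜.S_mul _ hs _ hb) _ ht, hdom⟩, hdom⟩
end

section
/- Let (A,S,Z,Φ) be a structured C*-algebra in which Z is binormal. If a,s,b ∈ S satisfy a <_s b, and y,z ∈ Z satisfy y = yz, then a − az and b − by lie in S and a − az <_s b − by. -/
variable {A : Type*} [CStarAlgebra A] [PartialOrder A] [StarOrderedRing A]

/-- For `m ≥ 1` and `x ∈ [0, 1]`, `x (1 - x) ^ m ≤ 1 / m`, in product form. -/
theorem natCast_mul_mul_one_sub_pow_le_one (m : ℕ) {x : ℝ} (h0 : 0 ≤ x) (h1 : x ≤ 1) :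
    m * (x * (1 - x) ^ m) ≤ 1 := by
  have hx : 0 ≤ 1 - x := sub_nonneg.2 h1
  have bernoulli : 1 + (m : ℝ) * x ≤ (1 + x) ^ m :=
    one_add_mul_le_pow (by linarith) m
  have hprod : (1 + x) ^ m * (1 - x) ^ m ≤ 1 := by
    rw [← mul_pow]
    exact pow_le_one₀ (by positivity) (by nlinarith)
  nlinarith [mul_le_mul_of_nonneg_right bernoulli (pow_nonneg hx m), pow_nonneg hx m]

/-- If `0 ≤ h` and `‖h‖ ≤ 1`, then `‖(1 - h) ^ m * h * (1 - h) ^ m‖ ≤ 1 / m` for `m ≥ 1`. -/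
theorem norm_one_sub_pow_mul_self_mul_le {h : A} (h0 : 0 ≤ h) (h1 : ‖h‖ ≤ 1) {m : ℕ}
    (hm : 0 < m) :
    ‖(1 - h) ^ m * h * (1 - h) ^ m‖ ≤ 1 / m := by
  rcases subsingleton_or_nontrivial A with _ | _
  · rw [Subsingleton.elim (_ * _) (0 : A), norm_zero]
    positivity
  have hsa : IsSelfAdjoint h := .of_nonneg h0
  have hcfc : (1 - h) ^ m * h * (1 - h) ^ m =
      cfc (fun x : ℝ ↦ (1 - x) ^ m * x * (1 - x) ^ m) h := by
    rw [cfc_mul _ _ h, cfc_mul _ _ h, cfc_pow _ m h, cfc_sub _ _ h, cfc_const_one ℝ h,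
      cfc_id' ℝ h]
  rw [hcfc]
  refine norm_cfc_le (by positivity) fun x hx ↦ ?_
  have hx0 : 0 ≤ x := spectrum_nonneg_of_nonneg h0 hx
  have hx1 : x ≤ 1 := (le_abs_self x).trans ((spectrum.norm_le_norm_of_mem hx).trans h1)
  have hx' : 0 ≤ 1 - x := sub_nonneg.2 hx1
  rw [Real.norm_of_nonneg (by positivity), le_div_iff₀ (by positivity)]
  have := natCast_mul_mul_one_sub_pow_le_one m hx0 hx1
  have hp : (1 - x) ^ m ≤ 1 := pow_le_one₀ hx' (by linarith)
  calc (1 - x) ^ m * x * (1 - x) ^ m * m = (m * (x * (1 - x) ^ m)) * (1 - x) ^ m := by ring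
    _ ≤ 1 := mul_le_one₀ this (by positivity) hp

open Filter Topology in
/-- If `‖b‖ ≤ 1`, then `b * (1 - star b * b) ^ n` tends to zero. -/
theorem tendsto_mul_one_sub_star_mul_self_pow {b : A} (hb : ‖b‖ ≤ 1) :
    Tendsto (fun n : ℕ ↦ b * (1 - star b * b) ^ n) atTop (𝓝 0) := by
  have hnorm : ‖star b * b‖ ≤ 1 := by
    rw [CStarRing.norm_star_mul_self]
    exact mul_le_one₀ hb (norm_nonneg b) hb
  have hsq : ∀ᶠ n : ℕ in atTop, ‖b * (1 - star b * b) ^ n‖ ^ 2 ≤ 1 / (n : ℝ) := by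
    filter_upwards [eventually_gt_atTop 0] with n hn
    have hmul : star (b * (1 - star b * b) ^ n) * (b * (1 - star b * b) ^ n) =
        (1 - star b * b) ^ n * (star b * b) * (1 - star b * b) ^ n := by
      simp [mul_assoc]
    rw [sq, ← CStarRing.norm_star_mul_self, hmul]
    exact norm_one_sub_pow_mul_self_mul_le (star_mul_self_nonneg b) hnorm hn
  have hlim := (squeeze_zero' (.of_forall fun n ↦ sq_nonneg _) hsq
    tendsto_one_div_atTop_nhds_zero_nat).sqrt
  rw [tendsto_zero_iff_norm_tendsto_zero]
  simpa using hlim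

namespace StructuredCStar

variable (𝒜 : StructuredCStar A)

theorem smul_mem_PhiS (c : ℂ) {x : A} (hx : x ∈ 𝒜.Φ '' 𝒜.S) : c • x ∈ 𝒜.Φ '' 𝒜.S := by
  obtain ⟨s, hs, rfl⟩ := hx
  exact ⟨c • s, 𝒜.S_smul c s hs, map_smul _ _ _⟩

theorem sub_mem_PhiS {x y : A} (hx : x ∈ 𝒜.Φ '' 𝒜.S) (hy : y ∈ 𝒜.Φ '' 𝒜.S) :
    x - y ∈ 𝒜.Φ '' 𝒜.S := by
  simpa [sub_eq_add_neg] using 𝒜.PhiS_add x hx _ (𝒜.smul_mem_PhiS (-1) hy)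

theorem mul_mem_PhiS {x y : A} (hx : x ∈ 𝒜.Φ '' 𝒜.S) (hy : y ∈ 𝒜.Φ '' 𝒜.S) :
    x * y ∈ 𝒜.Φ '' 𝒜.S := by
  obtain ⟨s, -, rfl⟩ := hy
  exact 𝒜.PhiS_ideal_right x hx s

theorem mul_mem_PhiS_of_mem_Z {x z : A} (hx : x ∈ 𝒜.Φ '' 𝒜.S) (hz : z ∈ 𝒜.Z) :
    x * z ∈ 𝒜.Φ '' 𝒜.S := by
  simpa [𝒜.Z_fixed z hz] using 𝒜.PhiS_ideal_right x hx z

theorem mem_S_of_mem_PhiS {x : A} (hx : x ∈ 𝒜.Φ '' 𝒜.S) : x ∈ 𝒜.S := by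
  obtain ⟨s, hs, rfl⟩ := hx
  exact 𝒜.PhiS_sub_S s hs

theorem sub_mem_Z {x y : A} (hx : x ∈ 𝒜.Z) (hy : y ∈ 𝒜.Z) : x - y ∈ 𝒜.Z := by
  simpa [sub_eq_add_neg] using 𝒜.Z_add x hx _ (𝒜.Z_smul (-1) y hy)

theorem commute_of_mem_Z_of_mem_PhiS {z x : A} (hz : z ∈ 𝒜.Z) (hx : x ∈ 𝒜.Φ '' 𝒜.S) :
    Commute z x := by
  obtain ⟨s, -, rfl⟩ := hx
  exact 𝒜.Z_central z hz s

theorem commute_of_mem_Z {y z : A} (hy : y ∈ 𝒜.Z) (hz : z ∈ 𝒜.Z) : Commute y z :=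
  𝒜.commute_of_mem_Z_of_mem_PhiS hy ⟨z, 𝒜.Z_sub_S hz, 𝒜.Z_fixed z hz⟩

theorem one_sub_one_sub_pow_mem_PhiS {h : A} (hh : h ∈ 𝒜.Φ '' 𝒜.S) (n : ℕ) :
    1 - (1 - h) ^ n ∈ 𝒜.Φ '' 𝒜.S := by
  induction n with
  | zero => simpa using 𝒜.smul_mem_PhiS 0 hh
  | succ n ih =>
    have hrec : 1 - (1 - h) ^ (n + 1) =
        (1 - (1 - h) ^ n) + (h - (1 - (1 - h) ^ n) * h) := by
      rw [pow_succ]; noncomm_ring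
    rw [hrec]
    exact 𝒜.PhiS_add _ ih _ (𝒜.sub_mem_PhiS hh (𝒜.mul_mem_PhiS ih hh))

open Filter Topology in
theorem sub_mul_mem_S_of_norm_le_one {b y : A} (hb : b ∈ 𝒜.S) (hb1 : ‖b‖ ≤ 1)
    (hy : y ∈ 𝒜.Z) : b - b * y ∈ 𝒜.S := by
  have hlim : Tendsto (fun n : ℕ ↦ (b - b * (1 - star b * b) ^ n) * (1 - y)) atTop
      (𝓝 ((b - 0) * (1 - y))) :=
    (tendsto_const_nhds.sub (tendsto_mul_one_sub_star_mul_self_pow hb1)).mul_const _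
  have hmem : (b - 0) * (1 - y) ∈ 𝒜.S := by
    refine 𝒜.S_isClosed.mem_of_tendsto hlim (.of_forall fun n ↦ ?_)
    have hp := 𝒜.one_sub_one_sub_pow_mem_PhiS (𝒜.S_sq_sub_PhiS b hb) n
    have hS := 𝒜.S_mul b hb _ (𝒜.mem_S_of_mem_PhiS
      (𝒜.sub_mem_PhiS hp (𝒜.mul_mem_PhiS_of_mem_Z hp hy)))
    simpa only [mul_sub, sub_mul, mul_one, one_mul, mul_assoc] using hS
  simpa [mul_sub] using hmem

theorem sub_mul_mem_S {b y : A} (hb : b ∈ 𝒜.S) (hy : y ∈ 𝒜.Z) : b - b * y ∈ 𝒜.S := by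
  rcases eq_or_ne b 0 with rfl | hb0
  · simpa using hb
  have hc : (‖b‖ : ℂ) ≠ 0 := by simpa using hb0
  have hnorm : ‖(‖b‖ : ℂ)⁻¹ • b‖ ≤ 1 := by simp [norm_smul, hb0]
  have hS := 𝒜.S_smul (‖b‖ : ℂ) _
    (𝒜.sub_mul_mem_S_of_norm_le_one (𝒜.S_smul (‖b‖ : ℂ)⁻¹ b hb) hnorm hy)
  rwa [smul_mul_assoc, ← smul_sub, smul_inv_smul₀ hc] at hS

end StructuredCStar

/-- if `Z` is binormal, `a <_s b`, `y, z ∈ Z` and `y = yz`, then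
`a - az` and `b - by` lie in `S` and `a - az <_s b - by`. -/
theorem StructuredCStar.domBy_sub (𝒜 : StructuredCStar A)
    (hZ : 𝒜.Binormal 𝒜.Z) {a s b : A}
    (ha : a ∈ 𝒜.S) (hs : s ∈ 𝒜.S) (hb : b ∈ 𝒜.S)
    (h : 𝒜.domBy a s b) {y z : A} (hy : y ∈ 𝒜.Z) (hz : z ∈ 𝒜.Z)
    (hyz : y = y * z) :
    a - a * z ∈ 𝒜.S ∧ b - b * y ∈ 𝒜.S ∧
      𝒜.domBy (a - a * z) s (b - b * y) := by
  obtain ⟨hasb, hbsa, has, hsa, hbs, hsb⟩ := h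
  refine ⟨𝒜.sub_mul_mem_S ha hz, 𝒜.sub_mul_mem_S hb hy, ?_, ?_, ?_, ?_, ?_, ?_⟩
  · have hzy : z * y = y := (𝒜.commute_of_mem_Z hz hy).eq.trans hyz.symm
    have hcomm : z * (s * b) = s * b * z := 𝒜.commute_of_mem_Z hz hsb
    symm
    calc (a - a * z) * s * (b - b * y)
        = (a * s * b - a * (z * (s * b))) * (1 - y) := by noncomm_ring
      _ = a * s * b * (1 - z) * (1 - y) := by rw [hcomm]; noncomm_ring
      _ = a * (1 - z - y + z * y) := by rw [← hasb]; noncomm_ring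
      _ = a - a * z := by rw [hzy]; noncomm_ring
  · have hcomm : s * a * z = z * (s * a) := (𝒜.commute_of_mem_Z_of_mem_PhiS hz hsa).symm
    symm
    calc (b - b * y) * s * (a - a * z)
        = b * s * a - b * s * a * z - b * y * (s * a - s * a * z) := by noncomm_ring
      _ = a - a * z - b * (y - y * z) * (s * a) := by rw [← hbsa, hcomm]; noncomm_ring
      _ = a - a * z := by rw [← hyz]; simp
  · have hazs : a * z * s = a * s * (b * z * s) := by
      conv_lhs => rw [hasb]
      noncomm_ring
    rw [sub_mul, hazs]
    exact 𝒜.sub_mem_PhiS has (𝒜.mul_mem_PhiS_of_mem_Z has (hZ b hb s hs hbs z hz))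
  · rw [mul_sub, ← mul_assoc]
    exact 𝒜.sub_mem_PhiS hsa (𝒜.mul_mem_PhiS_of_mem_Z hsa hz)
  · rw [sub_mul]
    exact 𝒜.sub_mem_Z hbs (hZ b hb s hs hbs y hy)
  · rw [mul_sub, ← mul_assoc]
    exact 𝒜.sub_mem_Z hsb (𝒜.Z_mul _ hsb y hy)
end

section
/- Let A be a C*-algebra and Φ : A → A a conditional expectation. If a ∈ A and u_1,…,u_n ∈ A satisfy ‖u_k‖ ≤ 1 for all k and Φ(u_j u_k*) = 0 whenever j ≠ k, then ∑_{k=1}^n Φ(a* u_k*) Φ(u_k a) ≤ Φ(a* a) in the canonical order of A (n-fold Kadison inequality). -/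
/-- A positive linear map between C⋆-algebras commutes with the involution. -/
theorem LinearMap.map_star_of_map_nonneg {A B : Type*}
    [CStarAlgebra A] [PartialOrder A] [StarOrderedRing A]
    [CStarAlgebra B] [PartialOrder B] [StarOrderedRing B]
    (Φ : A →ₗ[ℂ] B) (hpos : ∀ a : A, 0 ≤ a → 0 ≤ Φ a) (a : A) :
    Φ (star a) = star (Φ a) :=
  map_star (PositiveLinearMap.mk₀ Φ hpos) a

/-- the n-fold Kadison inequality for a conditional expectation `Φ`
on a C*-algebra: if `‖u k‖ ≤ 1` for all `k` and `Φ (u j * (u k)*) = 0` for `j ≠ k`,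
then `∑ k, Φ(a* (u k)*) Φ(u k a) ≤ Φ(a* a)`. -/
theorem nKadison {A : Type*} [CStarAlgebra A] [PartialOrder A] [StarOrderedRing A]
    (Φ : A →ₗ[ℂ] A)
    (hpos : ∀ a : A, 0 ≤ a → 0 ≤ Φ a)
    (hidem : ∀ a : A, Φ (Φ a) = Φ a)
    (hcontr : ∀ a : A, ‖Φ a‖ ≤ ‖a‖)
    (hmull : ∀ a b : A, Φ (Φ a * b) = Φ a * Φ b)
    (hmulr : ∀ a b : A, Φ (a * Φ b) = Φ a * Φ b)
    (a : A) (n : ℕ) (u : Fin n → A)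
    (hu : ∀ k, ‖u k‖ ≤ 1)
    (horth : ∀ j k, j ≠ k → Φ (u j * star (u k)) = 0) :
    ∑ k, Φ (star a * star (u k)) * Φ (u k * a) ≤ Φ (star a * a) := by
  have hstar (k : Fin n) : star (Φ (u k * a)) = Φ (star a * star (u k)) := by
    rw [← Φ.map_star_of_map_nonneg hpos, star_mul]
  set S := ∑ k, Φ (star a * star (u k)) * Φ (u k * a) with hS
  set p := ∑ k, star (u k) * Φ (u k * a) with hp
  have hp_star : star p = ∑ k, Φ (star a * star (u k)) * u k := by
    simp [hp, star_sum, hstar]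
  have hap : Φ (star a * p) = S := by
    simp only [hp, hS, Finset.mul_sum, map_sum, ← mul_assoc, hmulr]
  have hpa : Φ (star p * a) = S := by
    simp only [hp_star, hS, Finset.sum_mul, map_sum, mul_assoc, hmull]
  have hpp : Φ (star p * p) = ∑ k, Φ (star a * star (u k)) * Φ (u k * star (u k)) *
      Φ (u k * a) := by
    rw [hp_star, hp, Finset.sum_mul_sum, map_sum]
    refine Finset.sum_congr rfl fun j _ => ?_
    rw [map_sum, Finset.sum_eq_single j]
    · rw [← mul_assoc, hmulr, mul_assoc, hmull]
    · intro k _ hk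
      rw [← mul_assoc, hmulr, mul_assoc, hmull, horth j k hk.symm, mul_zero, zero_mul]
    · simp
  have hpp_le : Φ (star p * p) ≤ S := by
    rw [hpp]
    refine Finset.sum_le_sum fun k _ => ?_
    have hone : Φ (u k * star (u k)) ≤ 1 := by
      rw [← CStarAlgebra.norm_le_one_iff_of_nonneg _ (hpos _ (mul_star_self_nonneg _))]
      refine (hcontr _).trans ?_
      rw [CStarRing.norm_self_mul_star]
      exact mul_le_one₀ (hu k) (norm_nonneg _) (hu k)
    simpa [hstar] using star_left_conjugate_le_conjugate hone (Φ (u k * a))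
  have hnonneg : 0 ≤ Φ (star (a - p) * (a - p)) := hpos _ (star_mul_self_nonneg _)
  have hexpand : Φ (star (a - p) * (a - p)) = Φ (star a * a) - S - (S - Φ (star p * p)) := by
    rw [star_sub, sub_mul, mul_sub, mul_sub, map_sub, map_sub, map_sub, hap, hpa]
  rw [hexpand] at hnonneg
  exact sub_nonneg.mp ((sub_nonneg.mpr hpp_le).trans (sub_nonneg.mp hnonneg))
end

section
/- Let (A,S,Z,Φ) be a structured C*-algebra. Then Φ is normal if and only if Φ is shiftable. -/
variable {A : Type*} [CStarAlgebra A] [PartialOrder A] [StarOrderedRing A]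

namespace StructuredCStar

lemma Φ_star_mul_self (𝒜 : StructuredCStar A) {s : A} (hs : s ∈ 𝒜.S) :
    𝒜.Φ (star s * s) = star s * s := by
  obtain ⟨t, -, ht⟩ := 𝒜.S_sq_sub_PhiS s hs
  rw [← ht, 𝒜.Φ_idem]

lemma Φ_self_mul_star (𝒜 : StructuredCStar A) {s : A} (hs : s ∈ 𝒜.S) :
    𝒜.Φ (s * star s) = s * star s := by
  simpa using 𝒜.Φ_star_mul_self (𝒜.S_star s hs)

lemma Φ_mul_of_fixed_left (𝒜 : StructuredCStar A) {b : A} (hb : 𝒜.Φ b = b) (a : A) :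
    𝒜.Φ (b * a) = b * 𝒜.Φ a := by
  simpa only [hb] using 𝒜.Φ_mul_left b a

lemma Φ_mul_of_fixed_right (𝒜 : StructuredCStar A) {b : A} (hb : 𝒜.Φ b = b) (a : A) :
    𝒜.Φ (a * b) = 𝒜.Φ a * b := by
  simpa only [hb] using 𝒜.Φ_mul_right a b

/-- An element `x * s - s * y` killed by `star s` on both sides vanishes. -/
lemma sub_eq_zero_of_star_mul_of_mul_star {B : Type*} [CStarAlgebra B] {s x y : B}
    (hl : star s * (x * s - s * y) = 0) (hr : (x * s - s * y) * star s = 0) :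
    x * s - s * y = 0 := by
  set d := x * s - s * y with hd
  have hstar : star d = star s * star x - star y * star s := by simp [hd]
  have hcube : d * star d * d = 0 := by
    calc d * star d * d = (d * star s) * star x * d - d * star y * (star s * d) := by
          rw [hstar]; noncomm_ring
      _ = 0 := by rw [hl, hr]; simp
  rw [← CStarRing.star_mul_self_eq_zero_iff, ← CStarRing.star_mul_self_eq_zero_iff]
  calc star (star d * d) * (star d * d) = star d * (d * star d * d) := by
        simp [mul_assoc]
    _ = 0 := by rw [hcube, mul_zero]

/-- If `0 ≤ y ≤ c • (star s * s)`, then everything killed by `s` is killed by `y`. -/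
lemma mul_eq_zero_of_le_smul_star_mul_self {s y e : A} {c : ℝ} (hy : 0 ≤ y)
    (hle : y ≤ c • (star s * s)) (he : s * e = 0) : y * e = 0 := by
  obtain ⟨r, rfl⟩ := CStarAlgebra.nonneg_iff_eq_star_mul_self.mp hy
  have hre : star (r * e) * (r * e) = 0 := by
    refine le_antisymm ?_ (star_mul_self_nonneg _)
    calc star (r * e) * (r * e) = star e * (star r * r) * e := by simp [mul_assoc]
      _ ≤ star e * (c • (star s * s)) * e := star_left_conjugate_le_conjugate hle e
      _ = c • (star e * star s * (s * e)) := by simp [mul_assoc]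
      _ = 0 := by rw [he]; simp
  rw [mul_assoc, (CStarRing.star_mul_self_eq_zero_iff _).mp hre, mul_zero]

lemma shiftable_of_normal (𝒜 : StructuredCStar A)
    (h : ∀ a : A, ∀ s ∈ 𝒜.S, 𝒜.Φ (star s * a * s) = star s * 𝒜.Φ a * s)
    (a : A) {s : A} (hs : s ∈ 𝒜.S) : 𝒜.Φ (s * a) * s = s * 𝒜.Φ (a * s) := by
  refine sub_eq_zero.mp (sub_eq_zero_of_star_mul_of_mul_star ?_ ?_)
  · rw [mul_sub, sub_eq_zero, ← mul_assoc, ← mul_assoc, ← h _ s hs,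
      ← 𝒜.Φ_mul_of_fixed_left (𝒜.Φ_star_mul_self hs)]
    simp only [mul_assoc]
  · have hstar := h (a * s) (star s) (𝒜.S_star s hs)
    rw [star_star] at hstar
    rw [sub_mul, sub_eq_zero, ← hstar, mul_assoc,
      ← 𝒜.Φ_mul_of_fixed_right (𝒜.Φ_self_mul_star hs)]
    simp only [mul_assoc]

lemma Φ_conjugate_le (𝒜 : StructuredCStar A) {a s : A} (ha : 0 ≤ a) (hs : s ∈ 𝒜.S) :
    𝒜.Φ (star s * a * s) ≤ ‖a‖ • (star s * s) := by
  have hle : star s * a * s ≤ ‖a‖ • (star s * s) :=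
    CStarAlgebra.star_left_conjugate_le_norm_smul (IsSelfAdjoint.of_nonneg ha)
  have hpos := 𝒜.Φ_pos _ (sub_nonneg.mpr hle)
  rwa [map_sub, ← Complex.coe_smul, map_smul, 𝒜.Φ_star_mul_self hs, Complex.coe_smul,
    sub_nonneg] at hpos

lemma normal_of_shiftable_of_nonneg (𝒜 : StructuredCStar A)
    (h : ∀ a : A, ∀ s ∈ 𝒜.S, 𝒜.Φ (s * a) * s = s * 𝒜.Φ (a * s))
    {a : A} (ha : 0 ≤ a) {s : A} (hs : s ∈ 𝒜.S) :
    𝒜.Φ (star s * a * s) = star s * 𝒜.Φ a * s := by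
  set y := 𝒜.Φ (star s * a * s) with hy
  have hy0 : 0 ≤ y := 𝒜.Φ_pos _ (star_left_conjugate_nonneg ha s)
  have hse : s * (y - star s * 𝒜.Φ a * s) = 0 := by
    have hshift := h (star s * a) s hs
    rw [← mul_assoc, 𝒜.Φ_mul_of_fixed_left (𝒜.Φ_self_mul_star hs), ← hy] at hshift
    rw [mul_sub, ← hshift]
    simp [mul_assoc]
  have hye := mul_eq_zero_of_le_smul_star_mul_self hy0 (𝒜.Φ_conjugate_le ha hs) hse
  rw [← sub_eq_zero, ← CStarRing.star_mul_self_eq_zero_iff]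
  set e := y - star s * 𝒜.Φ a * s with he
  have hstar : star e = y - star s * star (𝒜.Φ a) * s := by
    simp [he, (IsSelfAdjoint.of_nonneg hy0).star_eq, mul_assoc]
  rw [hstar, sub_mul, hye, mul_assoc, hse, mul_zero, sub_zero]

lemma normal_of_shiftable (𝒜 : StructuredCStar A)
    (h : ∀ a : A, ∀ s ∈ 𝒜.S, 𝒜.Φ (s * a) * s = s * 𝒜.Φ (a * s))
    (a : A) {s : A} (hs : s ∈ 𝒜.S) :
    𝒜.Φ (star s * a * s) = star s * 𝒜.Φ a * s := by
  have ha : a ∈ Submodule.span ℂ {a : A | 0 ≤ a} := by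
    rw [CStarAlgebra.span_nonneg]; trivial
  induction ha using Submodule.span_induction with
  | mem a ha => exact 𝒜.normal_of_shiftable_of_nonneg h ha hs
  | zero => simp
  | add a b _ _ iha ihb => simp only [mul_add, add_mul, map_add, iha, ihb]
  | smul c a _ ih => simp only [mul_smul_comm, smul_mul_assoc, map_smul, ih]

end StructuredCStar

/-- `Φ` is normal iff `Φ` is shiftable. -/
theorem StructuredCStar.normal_iff_shiftable (𝒜 : StructuredCStar A) :
    (∀ a : A, ∀ s ∈ 𝒜.S, 𝒜.Φ (star s * a * s) = star s * 𝒜.Φ a * s) ↔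
    (∀ a : A, ∀ s ∈ 𝒜.S, 𝒜.Φ (s * a) * s = s * 𝒜.Φ (a * s)) :=
  ⟨fun h a _ hs => 𝒜.shiftable_of_normal h a hs, fun h a _ hs => 𝒜.normal_of_shiftable h a hs⟩
end

section
/- Let (A,S,Z,Φ) be a structured C*-algebra with Φ normal. Then for all a ∈ A and s ∈ S, if as ∈ Φ[S] then azs ∈ Φ[S] for every z ∈ Z. -/
variable {A : Type*} [CStarAlgebra A] [PartialOrder A] [StarOrderedRing A]

theorem pow_mul_self_mul_pow_le_one_div {y : ℝ} (hy0 : 0 ≤ y) (hy1 : y ≤ 1) (n : ℕ) :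
    (1 - y) ^ n * y * (1 - y) ^ n ≤ 1 / ((n : ℝ) + 1) := by
  have hp0 : 0 ≤ (1 - y) ^ n := pow_nonneg (by linarith) n
  have hp1 : (1 - y) ^ n ≤ 1 := pow_le_one₀ (by linarith) (by linarith)
  have hbern : 1 + (n : ℝ) * y ≤ (1 + y) ^ n := one_add_mul_le_pow (by linarith) n
  have hprod : (1 - y) ^ n * (1 + y) ^ n ≤ 1 := by
    rw [← mul_pow]
    exact pow_le_one₀ (by nlinarith) (by nlinarith)
  have hmul : (1 - y) ^ n * (1 + n * y) ≤ 1 := (mul_le_mul_of_nonneg_left hbern hp0).trans hprod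
  have hle : (1 - y) ^ n * y ≤ 1 / ((n : ℝ) + 1) := by
    rw [le_div_iff₀ (by positivity)]
    nlinarith [mul_le_mul_of_nonneg_left hy1 hp0]
  exact (mul_le_of_le_one_right (mul_nonneg hp0 hy0) hp1).trans hle

theorem IsSelfAdjoint.pow_mul_self_mul_pow_eq_cfc {B : Type*} [CStarAlgebra B] {b : B}
    (hb : IsSelfAdjoint b) (t : ℝ) (n : ℕ) :
    (1 - t • b) ^ n * b * (1 - t • b) ^ n
      = cfc (fun x : ℝ => (1 - t * x) ^ n * x * (1 - t * x) ^ n) b := by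
  have hone : cfc (fun x : ℝ => 1 - t * x) b = 1 - t • b := by
    rw [cfc_sub (fun _ => (1 : ℝ)) (fun x => t * x) b, cfc_const_one ℝ b, cfc_const_mul_id t b]
  have hpow : cfc (fun x : ℝ => (1 - t * x) ^ n) b = (1 - t • b) ^ n := by
    rw [cfc_pow (fun x : ℝ => 1 - t * x) n b, hone]
  rw [cfc_mul (fun x : ℝ => (1 - t * x) ^ n * x) (fun x => (1 - t * x) ^ n) b,
    cfc_mul (fun x : ℝ => (1 - t * x) ^ n) (fun x => x) b, hpow, cfc_id' ℝ b]

/-- In a C*-algebra, `s (1 - t s*s)ⁿ → 0` for a suitable `t`. -/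
theorem CStarAlgebra.exists_tendsto_mul_one_sub_smul_pow (s : A) :
    ∃ t : ℝ, Filter.Tendsto (fun n : ℕ => s * (1 - t • (star s * s)) ^ n)
      Filter.atTop (nhds 0) := by
  set b := star s * s with hb
  have hb0 : 0 ≤ b := star_mul_self_nonneg s
  have hbsa : IsSelfAdjoint b := .star_mul_self s
  obtain ⟨t, ht0, ht⟩ : ∃ t : ℝ, 0 < t ∧ t * ‖b‖ ≤ 1 := by
    refine ⟨(‖b‖ + 1)⁻¹, by positivity, ?_⟩
    rw [inv_mul_le_iff₀ (by positivity)]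
    linarith
  refine ⟨t, ?_⟩
  have bound : ∀ n : ℕ, ‖s * (1 - t • b) ^ n‖ ^ 2 ≤ t⁻¹ * (1 / ((n : ℝ) + 1)) := by
    intro n
    have hsa : IsSelfAdjoint ((1 - t • b) ^ n) :=
      ((IsSelfAdjoint.one A).sub ((IsSelfAdjoint.all t).smul hbsa)).pow n
    have hstar : star (s * (1 - t • b) ^ n) * (s * (1 - t • b) ^ n)
        = (1 - t • b) ^ n * b * (1 - t • b) ^ n := by
      rw [star_mul, hsa.star_eq, hb]; simp only [mul_assoc]
    rw [pow_two, ← CStarRing.norm_star_mul_self, hstar, hbsa.pow_mul_self_mul_pow_eq_cfc]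
    refine norm_cfc_le (by positivity) fun x hx => ?_
    have hx0 : 0 ≤ x := spectrum_nonneg_of_nonneg hb0 hx
    have : Nontrivial A := by
      refine not_subsingleton_iff_nontrivial.1 fun _ => ?_
      simp [spectrum.of_subsingleton] at hx
    have hxb : x ≤ ‖b‖ := (le_abs_self x).trans (spectrum.norm_le_norm_of_mem hx)
    have hy0 : 0 ≤ t * x := mul_nonneg ht0.le hx0
    have hy1 : t * x ≤ 1 := (mul_le_mul_of_nonneg_left hxb ht0.le).trans ht
    have hp0 : 0 ≤ (1 - t * x) ^ n := by
      have : 0 ≤ 1 - t * x := sub_nonneg.2 hy1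
      positivity
    rw [Real.norm_of_nonneg (mul_nonneg (mul_nonneg hp0 hx0) hp0), le_inv_mul_iff₀ ht0]
    refine le_of_eq_of_le ?_ (pow_mul_self_mul_pow_le_one_div hy0 hy1 n)
    ring
  rw [tendsto_zero_iff_norm_tendsto_zero]
  have hsq : Filter.Tendsto (fun n : ℕ => ‖s * (1 - t • b) ^ n‖ ^ 2) Filter.atTop (nhds 0) := by
    refine squeeze_zero (fun n => by positivity) bound ?_
    simpa using tendsto_one_div_add_atTop_nhds_zero_nat.const_mul t⁻¹
  simpa using hsq.sqrt

namespace StructuredCStar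

theorem isClosed_PhiS (𝒜 : StructuredCStar A) : IsClosed (𝒜.Φ '' 𝒜.S) := by
  have hcont : Continuous 𝒜.Φ :=
    (𝒜.Φ.mkContinuous 1 fun a => by simpa using 𝒜.Φ_contractive a).continuous
  have heq : 𝒜.Φ '' 𝒜.S = 𝒜.S ∩ {x | 𝒜.Φ x = x} := by
    ext x
    constructor
    · rintro ⟨y, hy, rfl⟩
      exact ⟨𝒜.PhiS_sub_S y hy, 𝒜.Φ_idem y⟩
    · rintro ⟨hx, hfix⟩
      exact ⟨x, hx, hfix⟩
  rw [heq]
  exact 𝒜.S_isClosed.inter (isClosed_eq hcont continuous_id)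

theorem mul_one_sub_pow_mem_PhiS (𝒜 : StructuredCStar A) (d : A) (n : ℕ) :
    ∀ x ∈ 𝒜.Φ '' 𝒜.S, x * (1 - 𝒜.Φ d) ^ n ∈ 𝒜.Φ '' 𝒜.S := by
  induction n with
  | zero => simp
  | succ n ih =>
    intro x hx
    rw [pow_succ', ← mul_assoc]
    refine ih _ ?_
    have := 𝒜.PhiS_add x hx _ (𝒜.PhiS_ideal_right x hx (-d))
    rwa [map_neg, mul_neg, ← sub_eq_add_neg, ← mul_one_sub] at this

end StructuredCStar

/-- if `Φ` is normal, `a ∈ A`, `s ∈ S` and `as ∈ Φ[S]`, then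
`azs ∈ Φ[S]` for all `z ∈ Z`. -/
theorem StructuredCStar.mul_Z_mul_mem_PhiS (𝒜 : StructuredCStar A)
    (hnormal : ∀ a : A, ∀ s ∈ 𝒜.S, 𝒜.Φ (star s * a * s) = star s * 𝒜.Φ a * s)
    {a s : A} (hs : s ∈ 𝒜.S) (h : a * s ∈ 𝒜.Φ '' 𝒜.S) :
    ∀ z ∈ 𝒜.Z, a * z * s ∈ 𝒜.Φ '' 𝒜.S := by
  intro z hz
  obtain ⟨t, ht⟩ := CStarAlgebra.exists_tendsto_mul_one_sub_smul_pow s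
  obtain ⟨d, -, hd⟩ := 𝒜.S_sq_sub_PhiS s hs
  obtain ⟨e, -, he⟩ := 𝒜.S_sq_sub_PhiS (star s) (𝒜.S_star s hs)
  rw [star_star] at he
  have hc : t • (star s * s) = 𝒜.Φ ((t : ℂ) • d) := by
    rw [map_smul, hd, Complex.coe_smul]
  -- `z` commutes with `s s*`, so `a z s s* s = (a s) (s* z s)`.
  have hmove : a * z * s * (t • (star s * s)) = a * s * 𝒜.Φ ((t : ℂ) • (star s * z * s)) := by
    rw [map_smul, hnormal z s hs, 𝒜.Z_fixed z hz, Complex.coe_smul, mul_smul_comm, mul_smul_comm]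
    congr 1
    have hcomm := 𝒜.Z_central z hz e
    rw [he] at hcomm
    calc a * z * s * (star s * s) = a * (z * (s * star s)) * s := by simp only [mul_assoc]
      _ = a * s * (star s * z * s) := by rw [hcomm]; simp only [mul_assoc]
  have hmem : ∀ n : ℕ,
      a * z * s - a * z * (s * (1 - t • (star s * s)) ^ n) ∈ 𝒜.Φ '' 𝒜.S := by
    intro n
    induction n with
    | zero => exact ⟨0, by simpa using 𝒜.S_smul 0 s hs, by simp⟩
    | succ n ih =>
      have hstep := 𝒜.mul_one_sub_pow_mem_PhiS ((t : ℂ) • d) n _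
        (𝒜.PhiS_ideal_right _ h ((t : ℂ) • (star s * z * s)))
      rw [← hmove, ← hc] at hstep
      convert 𝒜.PhiS_add _ ih _ hstep using 1
      rw [pow_succ']
      noncomm_ring
  refine 𝒜.isClosed_PhiS.mem_of_tendsto (b := Filter.atTop) ?_ (Filter.Eventually.of_forall hmem)
  simpa using (ht.const_mul (a * z)).const_sub (a * z * s)
end
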